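/- arXiv:dg-ga/9706005 — 2 statements merged into one kernel-verified Lean document; each statement's English description precedes it below -/
import Mathlib

section
/- Creation of a double fold by a C¹-small deformation of a generating function: for every integer n ≥ 1, every δ > 0, and each sign σ ∈ {+1, −1}, there exist a smooth function g : ℝⁿ × ℝ → ℝ, real numbers 0 < ρ₁ < ρ₂ < 1 and ξ₁, ξ₂ ∈ ℝ, such that: (i) g(y,ξ) = ξ² outside the compact set \overline{B}ⁿ × [−1,1] (where Bⁿ is the open unit ball of ℝⁿ); (ii) ‖g − ξ²‖_{C¹} < δ; (iii) g is a generating function generating an embedded Lagrangian L_g ⊆ T*ℝⁿ; (iv) the singular locus {(y,ξ) : ∂g/∂ξ(y,ξ) = 0 and ∂²g/∂ξ²(y,ξ) = 0} is exactly the union of the two disjoint spheres S₁ = {(y,ξ₁) : ‖y‖ = ρ₁} and S₂ = {(y,ξ₂) : ‖y‖ = ρ₂}; and (v) σ·∂³g/∂ξ³ > 0 at every point of S₁ and σ·∂³g/∂ξ³ < 0 at every point of S₂ (so L_g has a double fold along a pair of concentric (n−1)-spheres of folds carrying opposite coorientations, and either combination of the two opposite coorientations can be realized). -/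
/-!
The deformation is `g(y,ξ) = ξ² - ε² b(y) F(ξ/ε)`, with `b` a radial bump on the unit ball,
`b(0) = 1`, and `F` a compactly supported profile on the line.

*Smallness is free.* With `u = ξ/ε`, the function `g` is `ε²` times the `ε = 1` case, so the
deformation and its differential are `O(ε)` whatever `b` and `F` are (`c1Norm_small`), while the
fiber critical points and their degeneracy depend only on `(y,u)`. Since
`∂³g/∂ξ³ = -b(y) F'''(u)/ε`, changing the sign of `ε` swaps the two coorientations.

*Creating the folds.* The critical points satisfy `2u = t F'(u)` with `t = b(y) ∈ [0,1]`. Take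
`F = χ G` with `G > 0`, `G'(u) = 2 / ((u-1)² + 1/4)` and `χ` a cutoff increasing on the left and
decreasing on the right. Because `G > 0` and `G' > 0`, the monotonicity of `χ` excludes critical
points where `χ` is not locally `1` (`crit`), and elsewhere the equation reads `t = m(u)` for the
cubic `m(u) = u ((u-1)² + 1/4)`. The critical points of `m` are `1/2` (maximum, value `1/4`) and
`5/6` (minimum, value `25/108`), so the critical set is an S-shaped curve with exactly two folds,
of opposite signs, over the radii where `b = 1/4` and `b = 25/108` (`singular_gen`).

*Regularity and embeddedness.* Both come from `db ≠ 0` for `0 < ‖y‖ < 1`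
(`fderiv_bump_ne_zero`). At a fold, `∂g/∂ξ` has `y`-differential `-ε F'(u) db ≠ 0`. The covector
attached to a critical point is `-ε² F(u) db`, and `F` is injective on the range of possible `u`;
where `db = 0` one has `t ∈ {0,1}`, and the cubic takes these values only once (`crit_unique`).
-/

open Real Set Metric

noncomputable section

variable {X : Type*} [NormedAddCommGroup X] [NormedSpace ℝ X]

/-- The fiberwise derivative `∂f/∂ξ` of a family `f(y,ξ)` with fiber variable `ξ`. -/
def dxi (f : X × ℝ → ℝ) : X × ℝ → ℝ :=
  fun p => deriv (fun s => f (p.1, s)) p.2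

/-- The map `(y,ξ) ↦ (y, ∂f/∂y(y,ξ))` parametrizing the generated Lagrangian. -/
def lagMap (f : X × ℝ → ℝ) : X × ℝ → X × (X →L[ℝ] ℝ) :=
  fun p => (p.1, fderiv ℝ (fun q => f (q, p.2)) p.1)

/-- `f` is a generating function: `0` is a regular value of `∂f/∂ξ`. -/
def IsGenFun (f : X × ℝ → ℝ) : Prop :=
  ∀ p, dxi f p = 0 → fderiv ℝ (dxi f) p ≠ 0

/-- The generated Lagrangian `L_f` is embedded. -/
def GeneratesEmbedded (f : X × ℝ → ℝ) : Prop :=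
  Set.InjOn (lagMap f) {p | dxi f p = 0}

/-- The `C¹`-norm `sup |g| + sup ‖Dg‖` of `g`. -/
def c1Norm (g : X × ℝ → ℝ) : ℝ :=
  (⨆ p, |g p|) + ⨆ p, ‖fderiv ℝ g p‖

namespace DoubleFold

/-! ### The fiber profile -/

/-- A smooth cutoff supported in `[-2, 4]` and equal to `1` on `[-1, 3]`. -/
def cutoff (u : ℝ) : ℝ := smoothTransition (u + 2) * smoothTransition (4 - u)

/-- A positive primitive of `u ↦ 8 / (1 + (2u - 2)²)`. -/
def prim (u : ℝ) : ℝ := 4 * arctan (2 * u - 2) + 2 * π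

/-- The compactly supported fiber profile: the cut-off primitive. -/
def prof (u : ℝ) : ℝ := cutoff u * prim u

lemma contDiff_cutoff : ContDiff ℝ (⊤ : ℕ∞) cutoff := by
  unfold cutoff
  exact (smoothTransition.contDiff.comp (by fun_prop)).mul
    (smoothTransition.contDiff.comp (by fun_prop))

lemma contDiff_prof : ContDiff ℝ (⊤ : ℕ∞) prof := by
  unfold prof prim
  exact contDiff_cutoff.mul ((contDiff_const.mul
    (contDiff_arctan.comp (by fun_prop))).add contDiff_const)

lemma contDiff_deriv_prof : ContDiff ℝ (⊤ : ℕ∞) (deriv prof) :=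
  (contDiff_infty_iff_deriv.1 contDiff_prof).2

lemma contDiff_deriv2_prof : ContDiff ℝ (⊤ : ℕ∞) (deriv (deriv prof)) :=
  (contDiff_infty_iff_deriv.1 contDiff_deriv_prof).2

lemma prim_pos (u : ℝ) : 0 < prim u := by
  have := neg_pi_div_two_lt_arctan (2 * u - 2)
  unfold prim
  linarith

lemma hasDerivAt_prim (u : ℝ) : HasDerivAt prim (8 / (1 + (2 * u - 2) ^ 2)) u := by
  have h : HasDerivAt (fun u : ℝ => 2 * u - 2) 2 u := by
    simpa using ((hasDerivAt_id u).const_mul 2).sub_const 2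
  have := (h.arctan.const_mul 4).add_const (2 * π)
  convert! this using 1
  ring

lemma cutoff_eq_zero {u : ℝ} (h : u ∉ Icc (-2 : ℝ) 4) : cutoff u = 0 := by
  unfold cutoff
  by_cases h1 : u < -2
  · rw [smoothTransition.zero_of_nonpos (by linarith), zero_mul]
  · have h2 : 4 < u := by
      by_contra h2
      exact h ⟨by linarith, by linarith⟩
    rw [smoothTransition.zero_of_nonpos (x := 4 - u) (by linarith), mul_zero]

lemma cutoff_nonneg (u : ℝ) : 0 ≤ cutoff u :=
  mul_nonneg (smoothTransition.nonneg _) (smoothTransition.nonneg _)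

lemma cutoff_le_one (u : ℝ) : cutoff u ≤ 1 :=
  mul_le_one₀ (smoothTransition.le_one _) (smoothTransition.nonneg _) (smoothTransition.le_one _)

lemma cutoff_eq_one {u : ℝ} (h : u ∈ Ioo (-1 : ℝ) 3) : cutoff u = 1 := by
  unfold cutoff
  rw [smoothTransition.one_of_one_le (by linarith [h.1]),
    smoothTransition.one_of_one_le (by linarith [h.2]), mul_one]

lemma deriv_cutoff_nonneg {u : ℝ} (h : u < 3) : 0 ≤ deriv cutoff u := by
  have he : cutoff =ᶠ[nhds u] fun v => smoothTransition (v + 2) := by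
    filter_upwards [Iio_mem_nhds h] with v hv
    unfold cutoff
    rw [smoothTransition.one_of_one_le (x := 4 - v) (by linarith [mem_Iio.1 hv]), mul_one]
  rw [he.deriv_eq]
  exact Monotone.deriv_nonneg fun a b hab => smoothTransition.monotone (by linarith)

lemma deriv_cutoff_nonpos {u : ℝ} (h : -1 < u) : deriv cutoff u ≤ 0 := by
  have he : cutoff =ᶠ[nhds u] fun v => smoothTransition (4 - v) := by
    filter_upwards [Ioi_mem_nhds h] with v hv
    unfold cutoff
    rw [smoothTransition.one_of_one_le (x := v + 2) (by linarith [mem_Ioi.1 hv]), one_mul]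
  rw [he.deriv_eq]
  exact Antitone.deriv_nonpos fun a b hab => smoothTransition.monotone (by linarith)

lemma deriv_prof (u : ℝ) :
    deriv prof u = deriv cutoff u * prim u + cutoff u * (8 / (1 + (2 * u - 2) ^ 2)) :=
  (((contDiff_cutoff.differentiable (by simp)) u).hasDerivAt.mul (hasDerivAt_prim u)).deriv

lemma deriv_prof_of_mem {u : ℝ} (h : u ∈ Ioo (-1 : ℝ) 3) :
    deriv prof u = 8 / (1 + (2 * u - 2) ^ 2) := by
  have h0 : deriv cutoff u = 0 :=
    le_antisymm (deriv_cutoff_nonpos h.1) (deriv_cutoff_nonneg h.2)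
  rw [deriv_prof, h0, cutoff_eq_one h]
  ring

lemma deriv2_prof_of_mem {u : ℝ} (h : u ∈ Ioo (-1 : ℝ) 3) :
    deriv (deriv prof) u = -32 * (2 * u - 2) / (1 + (2 * u - 2) ^ 2) ^ 2 := by
  have he : deriv prof =ᶠ[nhds u] fun v => 8 / (1 + (2 * v - 2) ^ 2) := by
    filter_upwards [isOpen_Ioo.mem_nhds h] with v hv using deriv_prof_of_mem hv
  rw [he.deriv_eq]
  have hl : HasDerivAt (fun v : ℝ => 2 * v - 2) 2 u := by
    simpa using ((hasDerivAt_id u).const_mul 2).sub_const 2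
  have hne : 1 + (2 * u - 2) ^ 2 ≠ 0 := by positivity
  have := ((hasDerivAt_const u (8 : ℝ)).div ((hl.pow 2).const_add 1) hne).deriv
  refine Eq.trans this ?_
  simp only [Pi.pow_apply]
  field_simp
  ring

lemma deriv3_prof_of_mem {u : ℝ} (h : u ∈ Ioo (-1 : ℝ) 3) :
    deriv (deriv (deriv prof)) u =
      -64 / (1 + (2 * u - 2) ^ 2) ^ 2 + 256 * (2 * u - 2) ^ 2 / (1 + (2 * u - 2) ^ 2) ^ 3 := by
  have he : deriv (deriv prof) =ᶠ[nhds u]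
      fun v => -32 * (2 * v - 2) / (1 + (2 * v - 2) ^ 2) ^ 2 := by
    filter_upwards [isOpen_Ioo.mem_nhds h] with v hv using deriv2_prof_of_mem hv
  rw [he.deriv_eq]
  have hl : HasDerivAt (fun v : ℝ => 2 * v - 2) 2 u := by
    simpa using ((hasDerivAt_id u).const_mul 2).sub_const 2
  have hne : 1 + (2 * u - 2) ^ 2 ≠ 0 := by positivity
  have := ((hl.const_mul (-32)).div (((hl.pow 2).const_add 1).pow 2) (pow_ne_zero 2 hne)).deriv
  refine Eq.trans this ?_
  simp only [Pi.pow_apply]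
  field_simp
  ring

lemma prof_eq_prim {u : ℝ} (h : u ∈ Ioo (-1 : ℝ) 3) : prof u = prim u := by
  rw [prof, cutoff_eq_one h, one_mul]

lemma prof_injOn : InjOn prof (Ioo (-1 : ℝ) 3) := by
  intro u hu v hv h
  rw [prof_eq_prim hu, prof_eq_prim hv] at h
  have : arctan (2 * u - 2) = arctan (2 * v - 2) := by
    unfold prim at h
    linarith
  have := arctan_injective this
  linarith

/-- Fiber critical points at level `t` of the base bump are trapped where the cutoff is `1`,
and there they form the graph of a cubic `t = m(u)`. -/
lemma crit {t u : ℝ} (ht0 : 0 ≤ t) (ht1 : t ≤ 1) (h : 2 * u = t * deriv prof u) :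
    u ∈ Ioo (-1 : ℝ) 3 ∧ t = u * ((u - 1) ^ 2 + 1 / 4) := by
  have hp : 0 ≤ 8 / (1 + (2 * u - 2) ^ 2) := by positivity
  have hu0 : -1 < u := by
    by_contra hu
    have h1 := mul_nonneg (deriv_cutoff_nonneg (u := u) (by linarith)) (prim_pos u).le
    have h2 := mul_nonneg (cutoff_nonneg u) hp
    have h3 : 0 ≤ t * deriv prof u := by
      rw [deriv_prof]
      exact mul_nonneg ht0 (by linarith)
    linarith
  have hu3 : u < 3 := by
    by_contra hu
    have h1 := mul_nonpos_of_nonpos_of_nonneg (deriv_cutoff_nonpos hu0) (prim_pos u).le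
    have h2 : 8 / (1 + (2 * u - 2) ^ 2) ≤ 1 := by
      rw [div_le_one (by positivity)]
      nlinarith
    have h3 := mul_le_one₀ (cutoff_le_one u) hp h2
    have h4 : deriv prof u ≤ 1 := by
      rw [deriv_prof]
      linarith
    nlinarith
  refine ⟨⟨hu0, hu3⟩, ?_⟩
  rw [deriv_prof_of_mem ⟨hu0, hu3⟩] at h
  field_simp at h
  linarith

/-- The degenerate fiber critical points are the two critical points `1/2` and `5/6` of the
cubic `u ((u - 1)² + 1/4)`, with critical values `1/4` and `25/108`. -/
lemma crit_degenerate {t u : ℝ} (ht0 : 0 ≤ t) (ht1 : t ≤ 1) :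
    (2 * u = t * deriv prof u ∧ 2 = t * deriv (deriv prof) u) ↔
      (u = 1 / 2 ∧ t = 1 / 4) ∨ (u = 5 / 6 ∧ t = 25 / 108) := by
  constructor
  · rintro ⟨h1, h2⟩
    obtain ⟨hu, ht⟩ := crit ht0 ht1 h1
    rw [deriv2_prof_of_mem hu, ht] at h2
    field_simp at h2
    have hk : (0 : ℝ) < (1 + (2 * u - 2) ^ 2) := by positivity
    have h3 : (1 + (2 * u - 2) ^ 2) * ((2 * u - 1) * (6 * u - 5)) = 0 := by
      linear_combination (1 / 4) * h2
    rcases mul_eq_zero.1 ((mul_eq_zero.1 h3).resolve_left hk.ne') with h | h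
    · have hu' : u = 1 / 2 := by linarith
      subst hu'
      left
      exact ⟨rfl, by rw [ht]; norm_num⟩
    · have hu' : u = 5 / 6 := by linarith
      subst hu'
      right
      exact ⟨rfl, by rw [ht]; norm_num⟩
  · rintro (⟨rfl, rfl⟩ | ⟨rfl, rfl⟩) <;>
      rw [deriv2_prof_of_mem (by constructor <;> norm_num),
        deriv_prof_of_mem (by constructor <;> norm_num)] <;> norm_num

/-- Over the levels `t = 0` and `t = 1` there is only one fiber critical point. -/
lemma crit_unique {t u v : ℝ} (ht : t = 0 ∨ t = 1) (hu : t = u * ((u - 1) ^ 2 + 1 / 4))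
    (hv : t = v * ((v - 1) ^ 2 + 1 / 4)) : u = v := by
  rcases ht with rfl | rfl
  · have h (w : ℝ) (hw : 0 = w * ((w - 1) ^ 2 + 1 / 4)) : w = 0 :=
      (mul_eq_zero.1 hw.symm).resolve_right (by positivity)
    rw [h u hu, h v hv]
  · have h (w : ℝ) (hw : 1 = w * ((w - 1) ^ 2 + 1 / 4)) : 1 < w := by
      by_contra hw1
      rcases le_or_gt w 0 with h0 | h0
      · nlinarith [mul_nonpos_of_nonpos_of_nonneg h0 (by positivity : 0 ≤ (w - 1) ^ 2 + 1 / 4)]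
      · nlinarith [mul_nonneg h0.le (by linarith : 0 ≤ 1 - w), sq_nonneg (w - 1 / 2),
          mul_nonneg (mul_nonneg h0.le (by linarith : 0 ≤ 1 - w)) h0.le]
    have h1 := h u hu
    have h2 := h v hv
    have h3 : (u - v) * (u ^ 2 + u * v + v ^ 2 - 2 * u - 2 * v + 5 / 4) = 0 := by
      linear_combination hv - hu
    have h4 : 0 < u ^ 2 + u * v + v ^ 2 - 2 * u - 2 * v + 5 / 4 := by nlinarith
    linarith [(mul_eq_zero.1 h3).resolve_right h4.ne']

/-! ### The base bump -/

variable {E : Type*} [NormedAddCommGroup E]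

/-- The radial bump `exp (1 - 1 / (1 - ‖y‖²))`, extended by `0` outside the unit ball. -/
def bump (y : E) : ℝ := exp 1 * expNegInvGlue (1 - ‖y‖ ^ 2)

lemma glue_of_pos {x : ℝ} (h : 0 < x) : expNegInvGlue x = exp (-x⁻¹) := by
  simp [expNegInvGlue, h.not_ge]

lemma bump_nonneg (y : E) : 0 ≤ bump y :=
  mul_nonneg (exp_pos _).le (expNegInvGlue.nonneg _)

lemma bump_zero : bump (0 : E) = 1 := by
  rw [bump, norm_zero, glue_of_pos (by norm_num), ← exp_add]
  norm_num

lemma bump_le_one (y : E) : bump y ≤ 1 := by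
  rw [← bump_zero (E := E)]
  unfold bump
  gcongr
  apply expNegInvGlue.monotone
  simp

lemma bump_eq_zero {y : E} (h : 1 ≤ ‖y‖) : bump y = 0 := by
  rw [bump, expNegInvGlue.zero_of_nonpos (by nlinarith), mul_zero]

/-- The radius at which the bump takes the value `t ∈ (0, 1)`. -/
def radius (t : ℝ) : ℝ := √(1 - (1 - log t)⁻¹)

lemma radius_sq {t : ℝ} (h0 : 0 < t) (h1 : t < 1) : radius t ^ 2 = 1 - (1 - log t)⁻¹ := by
  have := log_neg h0 h1
  have h2 : (1 - log t)⁻¹ ≤ 1 := inv_le_one_of_one_le₀ (by linarith)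
  exact sq_sqrt (by linarith)

lemma radius_pos {t : ℝ} (h0 : 0 < t) (h1 : t < 1) : 0 < radius t := by
  have := log_neg h0 h1
  have h2 : (1 - log t)⁻¹ < 1 := inv_lt_one_of_one_lt₀ (by linarith)
  exact sqrt_pos.2 (by linarith)

lemma radius_lt_one {t : ℝ} (h0 : 0 < t) (h1 : t < 1) : radius t < 1 := by
  have := log_neg h0 h1
  have h2 : 0 < (1 - log t)⁻¹ := inv_pos.2 (by linarith)
  have := radius_sq h0 h1
  nlinarith [radius_pos h0 h1]

lemma radius_lt_radius {s t : ℝ} (h0 : 0 < s) (hst : s < t) (h1 : t < 1) :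
    radius t < radius s := by
  have hs := radius_sq h0 (hst.trans h1)
  have ht := radius_sq (h0.trans hst) h1
  have h2 := log_lt_log h0 hst
  have h3 := log_neg (h0.trans hst) h1
  have h4 : (1 - log s)⁻¹ < (1 - log t)⁻¹ :=
    inv_strictAnti₀ (by linarith) (by linarith)
  nlinarith [radius_pos h0 (hst.trans h1), radius_pos (h0.trans hst) h1]

lemma bump_eq_iff {t : ℝ} (h0 : 0 < t) (h1 : t < 1) (y : E) :
    bump y = t ↔ ‖y‖ = radius t := by
  have hl := log_neg h0 h1
  constructor
  · intro h
    have hy : 0 < 1 - ‖y‖ ^ 2 := by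
      by_contra hy
      rw [bump, expNegInvGlue.zero_of_nonpos (by linarith), mul_zero] at h
      linarith
    rw [bump, glue_of_pos hy, ← exp_add] at h
    have h2 : log t = 1 + -(1 - ‖y‖ ^ 2)⁻¹ := by rw [← h, log_exp]
    have h3 : ‖y‖ ^ 2 = radius t ^ 2 := by
      rw [radius_sq h0 h1, h2]
      ring_nf
      simp
    exact (pow_left_inj₀ (norm_nonneg y) (radius_pos h0 h1).le two_ne_zero).1 h3
  · intro h
    rw [bump, h, radius_sq h0 h1, sub_sub_cancel, glue_of_pos (inv_pos.2 (by linarith)), inv_inv,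
      ← exp_add, show 1 + -(1 - log t) = log t by ring, exp_log h0]

variable [InnerProductSpace ℝ E]

lemma contDiff_bump : ContDiff ℝ (⊤ : ℕ∞) (bump : E → ℝ) := by
  unfold bump
  exact contDiff_const.mul (expNegInvGlue.contDiff.comp
    (contDiff_const.sub (contDiff_norm_sq ℝ)))

/-- The bump has no critical point in the open unit ball other than the origin. -/
lemma fderiv_bump_ne_zero {y : E} (h0 : y ≠ 0) (h1 : ‖y‖ < 1) : fderiv ℝ bump y ≠ 0 := by
  have hx : 0 < 1 - ‖y‖ ^ 2 := by nlinarith [norm_nonneg y]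
  have hg : HasDerivAt expNegInvGlue
      (exp (-(1 - ‖y‖ ^ 2)⁻¹) * -(-((1 - ‖y‖ ^ 2) ^ 2)⁻¹)) (1 - ‖y‖ ^ 2) := by
    refine ((hasDerivAt_inv hx.ne').neg.exp).congr_of_eventuallyEq ?_
    filter_upwards [Ioi_mem_nhds hx] with x hx using glue_of_pos hx
  have hn := ((hasStrictFDerivAt_norm_sq y).hasFDerivAt).const_sub 1
  have hb := (hg.comp_hasFDerivAt (f := fun y : E => 1 - ‖y‖ ^ 2) y hn).const_mul (exp 1)
  have hb' : fderiv ℝ (bump : E → ℝ) y = _ := hb.fderiv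
  rw [hb']
  intro h
  have h2 := DFunLike.congr_fun h y
  simp [h0, hx.ne', exp_ne_zero] at h2

/-! ### The rescaled deformation -/

/-- Under the rescaling both the values and the differential of a compactly supported
deformation are `O(ε)`. -/
lemma c1Norm_small {h : X × ℝ → ℝ} (hh : ContDiff ℝ (⊤ : ℕ∞) h) (hc : HasCompactSupport h)
    {δ : ℝ} (hδ : 0 < δ) : ∃ e > 0, ∀ ε : ℝ, ε ≠ 0 → |ε| ≤ e →
      c1Norm (fun p : X × ℝ => -(ε ^ 2 * h (p.1, p.2 / ε))) < δ := by
  obtain ⟨A, hA⟩ := hh.continuous.bounded_above_of_compact_support hc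
  obtain ⟨B, hB⟩ := (hh.continuous_fderiv (by simp)).bounded_above_of_compact_support
    (hc.fderiv (𝕜 := ℝ))
  have hA0 : 0 ≤ A := (norm_nonneg _).trans (hA 0)
  have hB0 : 0 ≤ B := (norm_nonneg _).trans (hB 0)
  refine ⟨min 1 (δ / (A + B + 1)), by positivity, fun ε hε he => ?_⟩
  have he1 : |ε| ≤ 1 := he.trans (min_le_left _ _)
  have he2 : |ε| * (A + B + 1) ≤ δ :=
    (le_div_iff₀ (by positivity)).1 (he.trans (min_le_right _ _))
  have hpos : 0 < |ε| := abs_pos.2 hε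
  have h1 : (⨆ p : X × ℝ, |-(ε ^ 2 * h (p.1, p.2 / ε))|) ≤ |ε| * A := by
    refine ciSup_le fun p => ?_
    rw [abs_neg, abs_mul, abs_pow]
    have := hA (p.1, p.2 / ε)
    rw [norm_eq_abs] at this
    exact mul_le_mul (by nlinarith) this (abs_nonneg _) hpos.le
  have h2 : (⨆ p : X × ℝ, ‖fderiv ℝ (fun p : X × ℝ => -(ε ^ 2 * h (p.1, p.2 / ε))) p‖)
      ≤ |ε| * B := by
    refine ciSup_le fun p => ?_
    let L : X × ℝ →L[ℝ] X × ℝ :=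
      (ContinuousLinearMap.fst ℝ X ℝ).prod (ε⁻¹ • ContinuousLinearMap.snd ℝ X ℝ)
    have hL : ‖L‖ ≤ |ε|⁻¹ := by
      refine L.opNorm_le_bound (by positivity) fun q => ?_
      have hq1 : ‖q.1‖ ≤ ‖q‖ := norm_fst_le q
      have hq2 : ‖q.2‖ ≤ ‖q‖ := norm_snd_le q
      have hi : 1 ≤ |ε|⁻¹ := (one_le_inv₀ hpos).2 he1
      change ‖(q.1, ε⁻¹ * q.2)‖ ≤ _
      rw [Prod.norm_mk, norm_mul, norm_inv, norm_eq_abs ε]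
      refine max_le ?_ (by gcongr)
      nlinarith [norm_nonneg q]
    have hd : HasFDerivAt (fun p : X × ℝ => -(ε ^ 2 * h (p.1, p.2 / ε)))
        (-(ε ^ 2) • (fderiv ℝ h (L p)).comp L) p := by
      have h3 := (((hh.differentiable (by simp) (L p)).hasFDerivAt.comp p
        L.hasFDerivAt).const_mul (-(ε ^ 2)))
      have hfun : (fun p : X × ℝ => -(ε ^ 2 * h (p.1, p.2 / ε))) =
          fun p => -(ε ^ 2) * (h ∘ L) p := by
        funext p
        simp [L, div_eq_inv_mul]
      rw [hfun]
      exact h3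
    rw [hd.fderiv]
    refine ContinuousLinearMap.opNorm_le_bound _ (by positivity) fun v => ?_
    change ‖-(ε ^ 2) * fderiv ℝ h (L p) (L v)‖ ≤ _
    rw [norm_mul, norm_neg, norm_pow, norm_eq_abs ε]
    calc |ε| ^ 2 * ‖fderiv ℝ h (L p) (L v)‖ ≤ |ε| ^ 2 * (B * (|ε|⁻¹ * ‖v‖)) := by
          gcongr
          exact ((fderiv ℝ h (L p)).le_of_opNorm_le (hB _) _).trans
            (mul_le_mul_of_nonneg_left (L.le_of_opNorm_le hL v) hB0)
      _ = |ε| * B * ‖v‖ := by field_simp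
  have h3 : c1Norm (fun p : X × ℝ => -(ε ^ 2 * h (p.1, p.2 / ε))) ≤ |ε| * A + |ε| * B :=
    add_le_add h1 h2
  nlinarith

/-- The deformation `ξ² - ε² bump(y) prof(ξ/ε)`, the rescaling by `ε` of its `ε = 1` case.
A negative `ε` also reflects the fiber, which swaps the coorientations. -/
def gen (ε : ℝ) (p : E × ℝ) : ℝ := p.2 ^ 2 - ε ^ 2 * (bump p.1 * prof (p.2 / ε))

lemma contDiff_bump_mul_prof :
    ContDiff ℝ (⊤ : ℕ∞) fun p : E × ℝ => bump p.1 * prof p.2 :=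
  (contDiff_bump.comp contDiff_fst).mul (contDiff_prof.comp contDiff_snd)

lemma contDiff_gen (ε : ℝ) : ContDiff ℝ (⊤ : ℕ∞) (gen ε : E × ℝ → ℝ) := by
  unfold gen
  exact (contDiff_snd.pow 2).sub (contDiff_const.mul
    ((contDiff_bump.comp contDiff_fst).mul (contDiff_prof.comp (contDiff_snd.div_const ε))))

omit [InnerProductSpace ℝ E] in
lemma dxi_gen {ε : ℝ} :
    dxi (gen ε : E × ℝ → ℝ) = fun p => 2 * p.2 - ε * (bump p.1 * deriv prof (p.2 / ε)) := by
  funext p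
  have hp : HasDerivAt (fun s => prof (s / ε)) (deriv prof (p.2 / ε) * (1 / ε)) p.2 :=
    ((contDiff_prof.differentiable (by simp)) _).hasDerivAt.comp p.2
      ((hasDerivAt_id p.2).div_const ε)
  have := (((hasDerivAt_id p.2).pow 2).sub ((hp.const_mul (bump p.1)).const_mul (ε ^ 2))).deriv
  refine Eq.trans this ?_
  simp only [id]
  field_simp
  ring

omit [InnerProductSpace ℝ E] in
lemma dxi2_gen {ε : ℝ} (hε : ε ≠ 0) :
    dxi (dxi (gen ε : E × ℝ → ℝ)) = fun p => 2 - bump p.1 * deriv (deriv prof) (p.2 / ε) := by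
  rw [dxi_gen]
  funext p
  have hp : HasDerivAt (fun s => deriv prof (s / ε))
      (deriv (deriv prof) (p.2 / ε) * (1 / ε)) p.2 :=
    ((contDiff_deriv_prof.differentiable (by simp)) _).hasDerivAt.comp p.2
      ((hasDerivAt_id p.2).div_const ε)
  have := (((hasDerivAt_id p.2).const_mul 2).sub ((hp.const_mul (bump p.1)).const_mul ε)).deriv
  refine Eq.trans this ?_
  field_simp

omit [InnerProductSpace ℝ E] in
lemma dxi3_gen {ε : ℝ} (hε : ε ≠ 0) :
    dxi (dxi (dxi (gen ε : E × ℝ → ℝ))) =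
      fun p => -(bump p.1 * deriv (deriv (deriv prof)) (p.2 / ε)) / ε := by
  rw [dxi2_gen hε]
  funext p
  have hp : HasDerivAt (fun s => deriv (deriv prof) (s / ε))
      (deriv (deriv (deriv prof)) (p.2 / ε) * (1 / ε)) p.2 :=
    ((contDiff_deriv2_prof.differentiable (by simp)) _).hasDerivAt.comp p.2
      ((hasDerivAt_id p.2).div_const ε)
  have := ((hp.const_mul (bump p.1)).const_sub 2).deriv
  refine Eq.trans this ?_
  field_simp

omit [InnerProductSpace ℝ E] in
lemma dxi_gen_eq_zero {ε : ℝ} (hε : ε ≠ 0) (p : E × ℝ) :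
    dxi (gen ε) p = 0 ↔ 2 * (p.2 / ε) = bump p.1 * deriv prof (p.2 / ε) := by
  rw [dxi_gen]
  have h : 2 * p.2 - ε * (bump p.1 * deriv prof (p.2 / ε)) =
      ε * (2 * (p.2 / ε) - bump p.1 * deriv prof (p.2 / ε)) := by
    field_simp
  simp only [h, mul_eq_zero, hε, false_or, sub_eq_zero]

omit [InnerProductSpace ℝ E] in
/-- The singular locus consists of the two spheres over the degenerate values of the cubic. -/
lemma singular_gen {ε : ℝ} (hε : ε ≠ 0) (p : E × ℝ) :
    (dxi (gen ε) p = 0 ∧ dxi (dxi (gen ε)) p = 0) ↔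
      (‖p.1‖ = radius (1 / 4) ∧ p.2 = ε * (1 / 2)) ∨
      (‖p.1‖ = radius (25 / 108) ∧ p.2 = ε * (5 / 6)) := by
  rw [dxi_gen_eq_zero hε, dxi2_gen hε]
  simp only [sub_eq_zero]
  rw [crit_degenerate (bump_nonneg _) (bump_le_one _),
    bump_eq_iff (by norm_num) (by norm_num), bump_eq_iff (by norm_num) (by norm_num),
    div_eq_iff hε, div_eq_iff hε, mul_comm ε, mul_comm ε, and_comm,
    and_comm (a := p.2 = 5 / 6 * ε)]

/-- Regularity can only fail on the singular locus, where the base bump has no critical point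
and the profile is strictly monotone. -/
lemma isGenFun_gen {ε : ℝ} (hε : ε ≠ 0) : IsGenFun (gen ε : E × ℝ → ℝ) := by
  rintro ⟨y, ξ⟩ h0 hD
  have hdiff : DifferentiableAt ℝ (dxi (gen ε : E × ℝ → ℝ)) (y, ξ) := by
    rw [dxi_gen]
    have : ContDiff ℝ (⊤ : ℕ∞)
        fun p : E × ℝ => 2 * p.2 - ε * (bump p.1 * deriv prof (p.2 / ε)) :=
      (contDiff_const.mul contDiff_snd).sub (contDiff_const.mul
        ((contDiff_bump.comp contDiff_fst).mul
          (contDiff_deriv_prof.comp (contDiff_snd.div_const ε))))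
    exact this.differentiable (by simp) _
  have hF := hdiff.hasFDerivAt
  rw [hD] at hF
  have h1 : dxi (dxi (gen ε : E × ℝ → ℝ)) (y, ξ) = 0 := by
    have := hF.comp_hasDerivAt (f := fun s : ℝ => (y, s)) ξ
      ((hasDerivAt_const ξ y).prodMk (hasDerivAt_id ξ))
    exact this.deriv
  have h2 : HasFDerivAt (fun q : E => dxi (gen ε) (q, ξ)) (0 : E →L[ℝ] ℝ) y := by
    have := hF.comp (f := fun q : E => (q, ξ)) y ((hasFDerivAt_id y).prodMk (hasFDerivAt_const ξ y))
    rwa [ContinuousLinearMap.zero_comp] at this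
  have hb : HasFDerivAt (bump : E → ℝ) (fderiv ℝ bump y) y :=
    (contDiff_bump.differentiable (by simp) y).hasFDerivAt
  have h3 : HasFDerivAt (fun q : E => dxi (gen ε) (q, ξ))
      (-(ε • deriv prof (ξ / ε) • fderiv ℝ bump y)) y := by
    rw [dxi_gen]
    exact ((hb.mul_const (deriv prof (ξ / ε))).const_mul ε).const_sub (2 * ξ)
  have h4 := h2.unique h3
  have h5 := (singular_gen hε (y, ξ)).1 ⟨h0, h1⟩
  have h6 : fderiv ℝ bump y ≠ 0 := by
    have hr (t : ℝ) (ht0 : 0 < t) (ht1 : t < 1) (hy : ‖y‖ = radius t) :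
        fderiv ℝ bump y ≠ 0 :=
      fderiv_bump_ne_zero (norm_pos_iff.1 (hy ▸ radius_pos ht0 ht1)) (hy ▸ radius_lt_one ht0 ht1)
    rcases h5 with h | h
    · exact hr _ (by norm_num) (by norm_num) h.1
    · exact hr _ (by norm_num) (by norm_num) h.1
  have h7 : deriv prof (ξ / ε) ≠ 0 := by
    intro h
    have hc := (dxi_gen_eq_zero hε _).1 h0
    simp only [h, mul_zero] at hc
    rcases h5 with ⟨-, h⟩ | ⟨-, h⟩ <;> simp only at h <;> rw [h] at hc <;> field_simp at hc <;>
      norm_num at hc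
  have h8 := h4.symm
  simp [hε, h6, h7] at h8

/-- The covector at a fiber critical point is `-ε² prof(ξ/ε)` times the differential of the
bump. Where the latter is nonzero, `prof` separates the critical points; elsewhere there is
just one. -/
lemma generatesEmbedded_gen {ε : ℝ} (hε : ε ≠ 0) :
    GeneratesEmbedded (gen ε : E × ℝ → ℝ) := by
  rintro ⟨y, ξ⟩ h ⟨y', ξ'⟩ h' he
  simp only [lagMap, Prod.mk.injEq] at he
  obtain ⟨rfl, he⟩ := he
  have hb : HasFDerivAt (bump : E → ℝ) (fderiv ℝ bump y) y :=
    (contDiff_bump.differentiable (by simp) y).hasFDerivAt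
  have hf (s : ℝ) : fderiv ℝ (fun q : E => gen ε (q, s)) y =
      -(ε ^ 2 • prof (s / ε) • fderiv ℝ bump y) :=
    (((hb.mul_const (prof (s / ε))).const_mul (ε ^ 2)).const_sub (s ^ 2)).fderiv
  rw [hf, hf, neg_inj] at he
  have he2 := smul_right_injective _ (pow_ne_zero 2 hε) he
  obtain ⟨hu, hm⟩ := crit (bump_nonneg _) (bump_le_one _) ((dxi_gen_eq_zero hε _).1 h)
  obtain ⟨hu', hm'⟩ := crit (bump_nonneg _) (bump_le_one _) ((dxi_gen_eq_zero hε _).1 h')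
  have key : ξ / ε = ξ' / ε := by
    by_cases hy0 : y = 0
    · exact crit_unique (Or.inr (by rw [hy0, bump_zero])) hm hm'
    by_cases hy1 : ‖y‖ < 1
    · exact prof_injOn hu hu' (smul_left_injective ℝ (fderiv_bump_ne_zero hy0 hy1) he2)
    · exact crit_unique (Or.inl (bump_eq_zero (not_lt.1 hy1))) hm hm'
  rw [div_left_inj' hε] at key
  rw [key]

omit [InnerProductSpace ℝ E] in
lemma bump_mul_prof_eq_zero (p : E × ℝ) (h : p ∉ closedBall (0 : E) 1 ×ˢ Icc (-2 : ℝ) 4) :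
    bump p.1 * prof p.2 = 0 := by
  by_cases h1 : ‖p.1‖ ≤ 1
  · have h2 : p.2 ∉ Icc (-2 : ℝ) 4 := fun h2 => h ⟨by simpa using h1, h2⟩
    rw [prof, cutoff_eq_zero h2, zero_mul, mul_zero]
  · rw [bump_eq_zero (not_le.1 h1).le, zero_mul]

end DoubleFold

open DoubleFold in
/-- Creation of a double fold by a `C¹`-small deformation of a generating function:
there is a smooth generating function `g`, agreeing with `ξ²` outside a compact set and
`C¹`-close to it, generating an embedded Lagrangian whose singular locus consists of
exactly two concentric `(n−1)`-spheres of folds carrying opposite coorientations (the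
signs of `∂³g/∂ξ³`); either combination of the two coorientations can be realized. -/
theorem double_fold_creation (n : ℕ) (hn : 1 ≤ n) (δ : ℝ) (hδ : 0 < δ)
    (σ : ℝ) (hσ : σ = 1 ∨ σ = -1) :
    ∃ g : (EuclideanSpace ℝ (Fin n)) × ℝ → ℝ, ∃ ρ₁ ρ₂ ξ₁ ξ₂ : ℝ,
      ContDiff ℝ (⊤ : ℕ∞) g ∧
      0 < ρ₁ ∧ ρ₁ < ρ₂ ∧ ρ₂ < 1 ∧
      (∀ p : (EuclideanSpace ℝ (Fin n)) × ℝ,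
        p ∉ (closedBall (0 : EuclideanSpace ℝ (Fin n)) 1) ×ˢ (Icc (-1 : ℝ) 1) →
        g p = p.2 ^ 2) ∧
      c1Norm (fun p => g p - p.2 ^ 2) < δ ∧
      IsGenFun g ∧ GeneratesEmbedded g ∧
      ({p : (EuclideanSpace ℝ (Fin n)) × ℝ | dxi g p = 0 ∧ dxi (dxi g) p = 0} =
        {p | ‖p.1‖ = ρ₁ ∧ p.2 = ξ₁} ∪ {p | ‖p.1‖ = ρ₂ ∧ p.2 = ξ₂}) ∧
      (∀ y : EuclideanSpace ℝ (Fin n), ‖y‖ = ρ₁ →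
        0 < σ * dxi (dxi (dxi g)) (y, ξ₁)) ∧
      (∀ y : EuclideanSpace ℝ (Fin n), ‖y‖ = ρ₂ →
        σ * dxi (dxi (dxi g)) (y, ξ₂) < 0) := by
  have hsupp : HasCompactSupport
      fun p : EuclideanSpace ℝ (Fin n) × ℝ => bump p.1 * prof p.2 :=
    HasCompactSupport.intro ((isCompact_closedBall _ _).prod isCompact_Icc)
      bump_mul_prof_eq_zero
  obtain ⟨e, he0, he⟩ := c1Norm_small contDiff_bump_mul_prof hsupp hδ
  -- The bound `1/4` brings the fiber support `[-2, 4]` into `[-1, 1]`; the sign of `ε` is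
  -- opposite to `σ` since the third derivative of `prof` at `1/2` is positive.
  set ε : ℝ := -σ * min e (1 / 4) with hεdef
  have hm0 : 0 < min e (1 / 4) := by positivity
  have hσ2 : σ * σ = 1 := by rcases hσ with rfl | rfl <;> norm_num
  have hσ0 : σ ≠ 0 := by rcases hσ with rfl | rfl <;> norm_num
  have habs : |ε| = min e (1 / 4) := by
    rw [hεdef, abs_mul, abs_neg, abs_of_pos hm0]
    rcases hσ with rfl | rfl <;> norm_num
  have hε : ε ≠ 0 := mul_ne_zero (neg_ne_zero.2 hσ0) hm0.ne'
  have hsign (x : ℝ) : σ * (-x / ε) = x / min e (1 / 4) := by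
    rw [hεdef]
    field_simp
  refine ⟨gen ε, radius (1 / 4), radius (25 / 108), ε * (1 / 2), ε * (5 / 6), contDiff_gen ε,
    radius_pos (by norm_num) (by norm_num),
    radius_lt_radius (by norm_num) (by norm_num) (by norm_num),
    radius_lt_one (by norm_num) (by norm_num), ?_, ?_, isGenFun_gen hε,
    generatesEmbedded_gen hε, ?_, ?_, ?_⟩
  · intro p hp
    have : bump p.1 * prof (p.2 / ε) = 0 := by
      refine bump_mul_prof_eq_zero (p.1, p.2 / ε) fun h => hp ⟨h.1, ?_⟩
      have h2 : |p.2 / ε| ≤ 4 := abs_le.2 ⟨by linarith [h.2.1], h.2.2⟩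
      rw [abs_div, div_le_iff₀ (abs_pos.2 hε), habs] at h2
      exact abs_le.1 (by linarith [min_le_right e (1 / 4)])
    rw [gen, this]
    ring
  · have hfun : (fun p : EuclideanSpace ℝ (Fin n) × ℝ => gen ε p - p.2 ^ 2) =
        fun p => -(ε ^ 2 * (bump p.1 * prof (p.2 / ε))) := by
      funext p
      rw [gen]
      ring
    rw [hfun]
    exact he ε hε (habs.trans_le (min_le_left _ _))
  · ext p
    exact singular_gen hε p
  · intro y hy
    rw [dxi3_gen hε, hsign, mul_div_cancel_left₀ _ hε,
      (bump_eq_iff (by norm_num) (by norm_num) y).2 hy,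
      deriv3_prof_of_mem (by constructor <;> norm_num)]
    exact div_pos (by norm_num) hm0
  · intro y hy
    rw [dxi3_gen hε, hsign, mul_div_cancel_left₀ _ hε,
      (bump_eq_iff (by norm_num) (by norm_num) y).2 hy,
      deriv3_prof_of_mem (by constructor <;> norm_num)]
    exact div_neg_of_neg_of_pos (by norm_num) hm0
end
end

section
/- For every integer s ≥ 1 and all reals C > 0 and ε > 0 there exist δ > 0 and r > 0 such that: for every a ∈ [−δ, C], every t = (t₁, …, t_s) ∈ ℝ^s with ‖t‖ ≤ r, and every x ∈ ℝ satisfying Σ_{i=1}^s i·t_i·x^{i−1} + (s+1)·a·x^s + (s+3)·x^{s+2} = 0, one has |x| < ε. (All real critical points of the polynomial x ↦ t₁x + … + t_s x^s + a x^{s+1} + x^{s+3} are contained in the ε-ball around 0, uniformly for a in [−δ, C] and t small.) -/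
/-!
Take `δ = ε²`. If `|x| ≥ ε` then `(s+1)a + (s+3)x² ≥ (s+3)x² - (s+1)ε² ≥ 2x²`, so the two top terms,
which are `x^s ((s+1)a + (s+3)x²)`, have absolute value at least `2|x|^(s+2)`.
With `m = min ε 1` one has `m^(s+2) |x|^i ≤ |x|^(s+2)` for `i < s`, so for `‖t‖ ≤ m^(s+2)/s²`
the remaining `s` terms sum to at most `|x|^(s+2)` in absolute value, and the total cannot vanish.
-/

open Real Set Finset

/-- Uniform localization of critical points: all real critical points of the polynomial
`x ↦ t₁x + … + t_s x^s + a x^{s+1} + x^{s+3}` lie in the `ε`-ball around `0`,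
uniformly for `a ∈ [−δ, C]` and `‖t‖ ≤ r` with `δ, r` small enough. -/
theorem critical_points_uniformly_localized (s : ℕ) (hs : 1 ≤ s) (C : ℝ) (hC : 0 < C)
    (ε : ℝ) (hε : 0 < ε) :
    ∃ δ > 0, ∃ r > 0, ∀ a ∈ Icc (-δ) C, ∀ t : Fin s → ℝ, ‖t‖ ≤ r → ∀ x : ℝ,
      (∑ i : Fin s, ((i : ℕ) + 1 : ℝ) * t i * x ^ (i : ℕ)) +
        ((s : ℝ) + 1) * a * x ^ s + ((s : ℝ) + 3) * x ^ (s + 2) = 0 →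
      |x| < ε := by
  have hs0 : (0 : ℝ) < s := by exact_mod_cast hs
  obtain ⟨m, hm0, hm1, hmε⟩ : ∃ m : ℝ, 0 < m ∧ m ≤ 1 ∧ m ≤ ε :=
    ⟨min ε 1, lt_min hε one_pos, min_le_right _ _, min_le_left _ _⟩
  refine ⟨ε ^ 2, by positivity, m ^ (s + 2) / (s : ℝ) ^ 2, by positivity, ?_⟩
  intro a ha t ht x hx
  by_contra! hxε
  have hy : 0 < |x| := hε.trans_le hxε
  have hsq : ε ^ 2 ≤ x ^ 2 := by
    rw [← sq_abs x]
    gcongr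
  have hfac : 2 * x ^ 2 ≤ ((s : ℝ) + 1) * a + (s + 3) * x ^ 2 := by
    have h1 : ((s : ℝ) + 1) * (-x ^ 2) ≤ (s + 1) * a := by
      gcongr
      linarith [ha.1]
    linarith
  have htop : 2 * |x| ^ (s + 2) ≤ |x ^ s * (((s : ℝ) + 1) * a + (s + 3) * x ^ 2)| := by
    rw [abs_mul, abs_pow, pow_add, sq_abs, mul_left_comm]
    gcongr
    exact hfac.trans (le_abs_self _)
  have hlow : |∑ i : Fin s, ((i : ℕ) + 1 : ℝ) * t i * x ^ (i : ℕ)| ≤ |x| ^ (s + 2) := by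
    have hterm : ∀ i ∈ (Finset.univ : Finset (Fin s)),
        |((i : ℕ) + 1 : ℝ) * t i * x ^ (i : ℕ)| ≤ |x| ^ (s + 2) / s := by
      intro i _
      have hi : ((i : ℕ) + 1 : ℝ) ≤ s := by exact_mod_cast i.2
      have hti : |t i| ≤ m ^ (s + 2) / (s : ℝ) ^ 2 := (norm_le_pi_norm t i).trans ht
      have hpow : m ^ (s + 2) * |x| ^ (i : ℕ) ≤ |x| ^ (s + 2) := by
        have hi2 : (s + 2 - i) + (i : ℕ) = s + 2 := by omega
        calc m ^ (s + 2) * |x| ^ (i : ℕ) ≤ m ^ (s + 2 - i) * |x| ^ (i : ℕ) := by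
              gcongr ?_ * _
              exact pow_le_pow_of_le_one hm0.le hm1 (by omega)
          _ ≤ |x| ^ (s + 2 - i) * |x| ^ (i : ℕ) := by
              gcongr
              exact hmε.trans hxε
          _ = |x| ^ (s + 2) := by rw [← pow_add, hi2]
      rw [abs_mul, abs_mul, abs_pow, abs_of_nonneg (by positivity : (0 : ℝ) ≤ (i : ℕ) + 1)]
      calc ((i : ℕ) + 1 : ℝ) * |t i| * |x| ^ (i : ℕ)
          ≤ s * (m ^ (s + 2) / (s : ℝ) ^ 2) * |x| ^ (i : ℕ) := by gcongr
        _ = m ^ (s + 2) * |x| ^ (i : ℕ) / s := by field_simp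
        _ ≤ |x| ^ (s + 2) / s := by gcongr
    calc _ ≤ ∑ i : Fin s, |((i : ℕ) + 1 : ℝ) * t i * x ^ (i : ℕ)| := abs_sum_le_sum_abs _ _
      _ ≤ ∑ _i : Fin s, |x| ^ (s + 2) / s := Finset.sum_le_sum hterm
      _ = |x| ^ (s + 2) := by
        rw [Finset.sum_const, Finset.card_univ, Fintype.card_fin, nsmul_eq_mul]
        field_simp
  have heq : x ^ s * (((s : ℝ) + 1) * a + (s + 3) * x ^ 2) =
      -∑ i : Fin s, ((i : ℕ) + 1 : ℝ) * t i * x ^ (i : ℕ) := by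
    linear_combination hx
  rw [heq, abs_neg] at htop
  have : 0 < |x| ^ (s + 2) := by positivity
  linarith
end
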